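/- Let (a_n) be a sequence of real numbers with a_n ~ K·ρⁿ·n^α as n → ∞ for constants K > 0, ρ > 0 and α < -1 irrational. Then the power series Σ a_n tⁿ is not algebraic over ℚ(t). -/

import Mathlib

open Filter Topology Finset
open scoped Nat

/-- The real number `Γ(β + n) / n!`. -/
noncomputable def gammaCoeff (β : ℝ) (n : ℕ) : ℝ := Real.Gamma (β + n) / n !

theorem Irrational.add_natCast_ne_neg {β : ℝ} (hβ : Irrational β) (n m : ℕ) : β + n ≠ -m :=
  fun h => (hβ.add_natCast n).ne_int (-m) (by simpa using h)

theorem gammaCoeff_ne_zero {β : ℝ} (hβ : Irrational β) (n : ℕ) : gammaCoeff β n ≠ 0 :=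
  div_ne_zero (Real.Gamma_ne_zero (hβ.add_natCast_ne_neg n)) (by positivity)

theorem gammaCoeff_pos {β : ℝ} {n : ℕ} (h : 0 < β + n) : 0 < gammaCoeff β n :=
  div_pos (Real.Gamma_pos_of_pos h) (by positivity)

theorem eventually_gammaCoeff_pos (β : ℝ) : ∀ᶠ n in atTop, 0 < gammaCoeff β n := by
  obtain ⟨N, hN⟩ := exists_nat_gt (-β)
  filter_upwards [eventually_ge_atTop N] with n hn
  have : (N : ℝ) ≤ n := by exact_mod_cast hn
  exact gammaCoeff_pos (by linarith)

theorem Real.Gamma_mul_prod_range_add {β : ℝ} (hβ : Irrational β) (n : ℕ) :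
    Real.Gamma β * ∏ j ∈ range n, (β + j) = Real.Gamma (β + n) := by
  induction n with
  | zero => simp
  | succ n ih =>
    rw [prod_range_succ, ← mul_assoc, ih, Nat.cast_succ, ← add_assoc, Real.Gamma_add_one, mul_comm]
    simpa using hβ.add_natCast_ne_neg n 0

theorem gammaCoeff_add_one_sub {β : ℝ} (hβ : Irrational β) (n : ℕ) :
    gammaCoeff (β + 1) (n + 1) - gammaCoeff (β + 1) n = β * gammaCoeff β (n + 1) := by
  have h : β + (n + 1 : ℕ) ≠ 0 := by simpa using hβ.add_natCast_ne_neg (n + 1) 0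
  have h1 : β + 1 + (n + 1 : ℕ) = (β + (n + 1 : ℕ)) + 1 := by ring
  have h2 : β + 1 + n = β + (n + 1 : ℕ) := by push_cast; ring
  rw [gammaCoeff, gammaCoeff, gammaCoeff, h1, h2, Real.Gamma_add_one h, Nat.factorial_succ]
  push_cast
  field_simp
  ring

theorem tendsto_gammaCoeff_div_rpow {β : ℝ} (hβ : Irrational β) :
    Tendsto (fun n : ℕ => gammaCoeff β n / (n : ℝ) ^ (β - 1)) atTop (𝓝 1) := by
  have hΓ : Real.Gamma β ≠ 0 := by
    simpa using Real.Gamma_ne_zero (s := β) (by simpa using hβ.add_natCast_ne_neg 0)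
  have h1 : Tendsto (fun n : ℕ => β / n + 1) atTop (𝓝 1) := by
    simpa using (tendsto_const_div_atTop_nhds_zero_nat β).add_const 1
  have h2 := (((Real.GammaSeq_tendsto_Gamma β).div_const (Real.Gamma β)).mul h1).inv₀
    (by simp [hΓ])
  rw [div_self hΓ, mul_one, inv_one] at h2
  refine h2.congr' ?_
  filter_upwards [eventually_gt_atTop 0] with n hn
  have hn' : (0 : ℝ) < n := by exact_mod_cast hn
  have hs : β + n ≠ 0 := by simpa using hβ.add_natCast_ne_neg n 0
  have hp := Real.Gamma_mul_prod_range_add hβ n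
  have hG : Real.Gamma (β + n) ≠ 0 := Real.Gamma_ne_zero (hβ.add_natCast_ne_neg n)
  have hP : ∏ j ∈ range n, (β + j) ≠ 0 := fun h0 => hG (by rw [← hp, h0, mul_zero])
  have hr : (n : ℝ) ^ β ≠ 0 := (Real.rpow_pos_of_pos hn' _).ne'
  rw [Real.GammaSeq, prod_range_succ, gammaCoeff, ← hp, Real.rpow_sub_one hn'.ne']
  field_simp

theorem tendsto_gammaCoeff_zero {β : ℝ} (hβ : Irrational β) (h : β < 1) :
    Tendsto (gammaCoeff β) atTop (𝓝 0) := by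
  have h1 : Tendsto (fun n : ℕ => (n : ℝ) ^ (β - 1)) atTop (𝓝 0) := by
    have := (tendsto_rpow_neg_atTop (y := 1 - β) (by linarith)).comp tendsto_natCast_atTop_atTop
    simpa [Function.comp_def] using this
  have h2 := (tendsto_gammaCoeff_div_rpow hβ).mul h1
  rw [mul_zero] at h2
  refine h2.congr' ?_
  filter_upwards [eventually_gt_atTop 0] with n hn
  have hn' : (0 : ℝ) < n := by exact_mod_cast hn
  exact div_mul_cancel₀ _ (Real.rpow_pos_of_pos hn' _).ne'

theorem summable_gammaCoeff {β : ℝ} (hβ : Irrational β) (h : β < 0) : Summable (gammaCoeff β) := by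
  have h1 : Summable fun n : ℕ => (n : ℝ) ^ (β - 1) := Real.summable_nat_rpow.2 (by linarith)
  refine summable_of_isBigO_nat h1 ?_
  refine Asymptotics.isBigO_of_div_tendsto_nhds ?_ 1 (tendsto_gammaCoeff_div_rpow hβ)
  filter_upwards [eventually_gt_atTop 0] with n hn h0
  have hn' : (0 : ℝ) < n := by exact_mod_cast hn
  exact absurd h0 (Real.rpow_pos_of_pos hn' _).ne'

theorem hasSum_gammaCoeff_tail {β : ℝ} (hβ : Irrational β) (h : β < 0) (n : ℕ) :
    HasSum (fun m => gammaCoeff β (m + n + 1)) (-gammaCoeff (β + 1) n / β) := by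
  have hs : Summable fun m => gammaCoeff β (m + n + 1) := by
    simpa only [add_assoc] using (summable_nat_add_iff (n + 1)).2 (summable_gammaCoeff hβ h)
  have hb : β ≠ 0 := h.ne
  have hp (N : ℕ) : ∑ m ∈ range N, gammaCoeff β (m + n + 1) =
      (gammaCoeff (β + 1) (N + n) - gammaCoeff (β + 1) n) / β := by
    induction N with
    | zero => simp
    | succ N ih =>
      have := gammaCoeff_add_one_sub hβ (N + n)
      rw [sum_range_succ, ih, show N + 1 + n = N + n + 1 by ring]
      field_simp
      linarith
  have ht : Tendsto (fun N => (gammaCoeff (β + 1) (N + n) - gammaCoeff (β + 1) n) / β) atTop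
      (𝓝 ((0 - gammaCoeff (β + 1) n) / β)) :=
    (((tendsto_add_atTop_iff_nat n).2 (tendsto_gammaCoeff_zero (by exact_mod_cast hβ.add_natCast 1)
      (by linarith))).sub_const _).div_const _
  rw [zero_sub] at ht
  have := hs.hasSum.tendsto_sum_nat
  simp only [hp] at this
  rw [← tendsto_nhds_unique this ht]
  exact hs.hasSum

theorem gammaCoeff_eq_Gamma_mul_choose {β : ℝ} (hβ : Irrational β) (n : ℕ) :
    gammaCoeff β n = Real.Gamma β * Ring.choose (β + n - 1) n := by
  have h1 := Ring.factorial_nsmul_multichoose_eq_ascPochhammer β n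
  have h2 : (ascPochhammer ℝ n).eval β = ∏ j ∈ range n, (β + j) := by
    clear h1
    induction n with
    | zero => simp
    | succ n ih => rw [ascPochhammer_succ_eval, prod_range_succ, ih]
  rw [Polynomial.ascPochhammer_smeval_eq_eval, h2, nsmul_eq_mul] at h1
  have h3 : Ring.choose (β + n - 1) n = Ring.multichoose β n := by
    rw [Ring.choose]
    congr 1
    ring
  have h4 : (n ! : ℝ) ≠ 0 := by positivity
  rw [gammaCoeff, ← Real.Gamma_mul_prod_range_add hβ n, ← h1, h3]
  field_simp

theorem hasSum_gammaCoeff_mul_pow {β : ℝ} (hβ : Irrational β) {x : ℝ} (hx : |x| < 1) :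
    HasSum (fun n => gammaCoeff β n * x ^ n) (Real.Gamma β / (1 - x) ^ β) := by
  have h := (Real.one_div_one_sub_rpow_hasFPowerSeriesOnBall_zero β).hasSum (y := x)
    (by simpa [enorm_eq_nnnorm, ← NNReal.coe_lt_coe] using hx)
  have h' := h.mul_left (Real.Gamma β)
  rw [zero_add, mul_one_div] at h'
  simpa only [FormalMultilinearSeries.ofScalars_apply_eq, gammaCoeff_eq_Gamma_mul_choose hβ,
    smul_eq_mul, mul_assoc] using h'

theorem Asymptotics.isLittleO_sub_mul_of_tendsto_div {ι : Type*} {l : Filter ι} {u v : ι → ℝ}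
    {L : ℝ} (hv : ∀ n, v n ≠ 0) (h : Tendsto (fun n => u n / v n) l (𝓝 L)) :
    (fun n => u n - L * v n) =o[l] v := by
  rw [Asymptotics.isLittleO_iff_tendsto fun n hn => absurd hn (hv n)]
  have := h.sub_const L
  rw [sub_self] at this
  refine this.congr fun n => ?_
  rw [sub_div, mul_div_cancel_right₀ _ (hv n)]

/-- If `a n ~ L * v n` with `v` summable and eventually positive, the tails of the two series
have ratio tending to `L`. -/
theorem tendsto_tail_div_tail {a v : ℕ → ℝ} {L : ℝ} (hv0 : ∀ n, v n ≠ 0)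
    (hpos : ∀ᶠ n in atTop, 0 < v n) (hs : Summable v)
    (h : Tendsto (fun n => a n / v n) atTop (𝓝 L)) :
    Tendsto (fun n => (∑' m, a (m + n + 1)) / ∑' m, v (m + n + 1)) atTop (𝓝 L) := by
  have hlo := Asymptotics.isLittleO_sub_mul_of_tendsto_div hv0 h
  set e : ℕ → ℝ := fun n => a n - L * v n with he
  have hse : Summable e := summable_of_isBigO_nat hs hlo.isBigO
  have shift {u : ℕ → ℝ} (hu : Summable u) (n : ℕ) : Summable fun m => u (m + n + 1) := by
    simpa only [add_assoc] using (summable_nat_add_iff (n + 1)).2 hu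
  have key : (fun n => ∑' m, e (m + n + 1)) =o[atTop] fun n => ∑' m, v (m + n + 1) := by
    rw [Asymptotics.isLittleO_iff]
    intro c hc
    obtain ⟨N, hN⟩ := eventually_atTop.1 (hpos.and (hlo.def hc))
    filter_upwards [eventually_ge_atTop N] with n hn
    have hb (m : ℕ) : ‖e (m + n + 1)‖ ≤ c * v (m + n + 1) := by
      obtain ⟨h1, h2⟩ := hN (m + n + 1) (by omega)
      rwa [Real.norm_of_nonneg h1.le] at h2
    refine (tsum_of_norm_bounded ((shift hs n).hasSum.mul_left c) hb).trans ?_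
    gcongr
    exact Real.le_norm_self _
  have hne : ∀ᶠ n in atTop, ∑' m, v (m + n + 1) ≠ 0 := by
    obtain ⟨N, hN⟩ := eventually_atTop.1 hpos
    filter_upwards [eventually_ge_atTop N] with n hn
    exact ((shift hs n).tsum_pos (fun m => (hN _ (by omega)).le) 0 (hN _ (by omega))).ne'
  have := key.tendsto_div_nhds_zero.add_const L
  rw [zero_add] at this
  refine this.congr' ?_
  filter_upwards [hne] with n hn
  have hsum : ∑' m, a (m + n + 1) = ∑' m, e (m + n + 1) + L * ∑' m, v (m + n + 1) := by
    rw [← tsum_mul_left, ← (shift hse n).tsum_add ((shift hs n).mul_left L)]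
    simp [he]
  rw [hsum, add_div, mul_div_cancel_right₀ _ hn]

theorem tendsto_tail_div_gammaCoeff {a : ℕ → ℝ} {β L : ℝ} (hβ : Irrational β) (h : β < 0)
    (ha : Tendsto (fun n => a n / gammaCoeff β n) atTop (𝓝 L)) :
    Tendsto (fun n => (∑' m, a (m + n + 1)) / gammaCoeff (β + 1) n) atTop (𝓝 (L / -β)) := by
  have := (tendsto_tail_div_tail (gammaCoeff_ne_zero hβ) (eventually_gammaCoeff_pos β)
    (summable_gammaCoeff hβ h) ha).div_const (-β)
  refine this.congr fun n => ?_
  have := h.ne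
  rw [(hasSum_gammaCoeff_tail hβ h n).tsum_eq]
  field_simp

theorem summable_of_tendsto_div_gammaCoeff {a : ℕ → ℝ} {β L : ℝ} (hβ : Irrational β) (h : β < 0)
    (ha : Tendsto (fun n => a n / gammaCoeff β n) atTop (𝓝 L)) : Summable a :=
  summable_of_isBigO_nat (summable_gammaCoeff hβ h) <|
    Asymptotics.isBigO_of_div_tendsto_nhds
      (.of_forall fun n hn => absurd hn (gammaCoeff_ne_zero hβ n)) L ha

theorem summable_mul_pow_of_tendsto_div_gammaCoeff {a : ℕ → ℝ} {β L : ℝ} (hβ : Irrational β)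
    (ha : Tendsto (fun n => a n / gammaCoeff β n) atTop (𝓝 L)) {x : ℝ} (hx : |x| < 1) :
    Summable fun n => a n * x ^ n :=
  summable_of_isBigO_nat (hasSum_gammaCoeff_mul_pow hβ hx).summable <|
    (Asymptotics.isBigO_of_div_tendsto_nhds
      (.of_forall fun n hn => absurd hn (gammaCoeff_ne_zero hβ n)) L ha).mul
        (Asymptotics.isBigO_refl _ _)

/-- An Abelian theorem: coefficient asymptotics `a n ~ L * Γ(β + n) / n!` with `β > 0` determine
the growth of the power series at `1`. -/
theorem tendsto_one_sub_rpow_mul_tsum {a : ℕ → ℝ} {β L : ℝ} (hβ : Irrational β) (h : 0 < β)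
    (ha : Tendsto (fun n => a n / gammaCoeff β n) atTop (𝓝 L)) :
    Tendsto (fun x : ℝ => (1 - x) ^ β * ∑' n, a n * x ^ n) (𝓝[<] 1)
      (𝓝 (L * Real.Gamma β)) := by
  have hlo := Asymptotics.isLittleO_sub_mul_of_tendsto_div (gammaCoeff_ne_zero hβ) ha
  have hΓ := Real.Gamma_pos_of_pos h
  have hpos (n : ℕ) : 0 < gammaCoeff β n := gammaCoeff_pos (by positivity)
  set e : ℕ → ℝ := fun n => a n - L * gammaCoeff β n with he
  have hIoo : ∀ᶠ x : ℝ in 𝓝[<] 1, x ∈ Set.Ioo 0 1 := Ioo_mem_nhdsLT one_pos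
  have hlim : Tendsto (fun x : ℝ => (1 - x) ^ β) (𝓝[<] 1) (𝓝 0) := by
    have : ContinuousAt (fun x : ℝ => (1 - x) ^ β) 1 :=
      (continuousAt_const.sub continuousAt_id).rpow_const (.inr h.le)
    simpa [Real.zero_rpow h.ne'] using this.tendsto.mono_left nhdsWithin_le_nhds
  have key : Tendsto (fun x : ℝ => (1 - x) ^ β * ∑' n, e n * x ^ n) (𝓝[<] 1) (𝓝 0) := by
    rw [Metric.tendsto_nhds]
    intro ε hε
    obtain ⟨N, hN⟩ := eventually_atTop.1 (hlo.def (c := ε / (2 * Real.Gamma β)) (by positivity))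
    set C := ∑ n ∈ range N, ‖e n‖ with hC
    have h1 : ∀ᶠ x : ℝ in 𝓝[<] 1, (1 - x) ^ β * C < ε / 2 := by
      have := hlim.mul_const C
      rw [zero_mul] at this
      exact this.eventually_lt_const (by positivity)
    filter_upwards [h1, hIoo] with x hx1 hx
    have hx' : |x| < 1 := by rw [abs_of_pos hx.1]; exact hx.2
    have hp : 0 < (1 - x) ^ β := Real.rpow_pos_of_pos (by linarith [hx.2]) _
    have hfin : HasSum (fun n => if n ∈ range N then ‖e n‖ else 0) C := by
      have : HasSum (fun n => if n ∈ range N then ‖e n‖ else 0)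
          (∑ n ∈ range N, if n ∈ range N then ‖e n‖ else 0) :=
        hasSum_sum_of_ne_finset_zero fun n hn => if_neg hn
      rwa [sum_ite_mem, inter_self] at this
    have hb (n : ℕ) : ‖e n * x ^ n‖ ≤ (if n ∈ range N then ‖e n‖ else 0) +
        ε / (2 * Real.Gamma β) * (gammaCoeff β n * x ^ n) := by
      have hxn : 0 < x ^ n := pow_pos hx.1 n
      have hxn1 : x ^ n ≤ 1 := pow_le_one₀ hx.1.le hx.2.le
      rw [norm_mul, Real.norm_of_nonneg hxn.le]
      split_ifs with hn
      · have := hpos n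
        have : 0 ≤ ε / (2 * Real.Gamma β) * (gammaCoeff β n * x ^ n) := by positivity
        nlinarith [norm_nonneg (e n)]
      · have := hN n (by simpa using hn)
        rw [Real.norm_of_nonneg (hpos n).le] at this
        rw [zero_add, ← mul_assoc]
        gcongr
    have := tsum_of_norm_bounded
      (hfin.add ((hasSum_gammaCoeff_mul_pow hβ hx').mul_left (ε / (2 * Real.Gamma β)))) hb
    rw [dist_zero_right, norm_mul, Real.norm_of_nonneg hp.le]
    calc (1 - x) ^ β * ‖∑' n, e n * x ^ n‖
        ≤ (1 - x) ^ β * (C + ε / (2 * Real.Gamma β) * (Real.Gamma β / (1 - x) ^ β)) := by gcongr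
      _ = (1 - x) ^ β * C + ε / 2 := by field_simp
      _ < ε := by linarith
  have := key.add_const (L * Real.Gamma β)
  rw [zero_add] at this
  refine this.congr' ?_
  filter_upwards [hIoo] with x hx
  have hx' : |x| < 1 := by rw [abs_of_pos hx.1]; exact hx.2
  have hp : 0 < (1 - x) ^ β := Real.rpow_pos_of_pos (by linarith [hx.2]) _
  have hg := (hasSum_gammaCoeff_mul_pow hβ hx').mul_left L
  have hsa := summable_mul_pow_of_tendsto_div_gammaCoeff hβ ha hx'
  have hsum : ∑' n, e n * x ^ n = ∑' n, a n * x ^ n - L * (Real.Gamma β / (1 - x) ^ β) := by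
    rw [← hg.tsum_eq, ← hsa.tsum_sub hg.summable]
    simp only [he, sub_mul, mul_assoc]
  rw [hsum]
  field_simp
  ring

open Polynomial in
/-- A function growing like `(1 - x) ^ (-β)` with `β` irrational as `x → 1⁻` satisfies no
polynomial equation over `ℝ[X]` near `1`. -/
theorem not_eventually_eval₂_eq_zero {P : ℝ[X][X]} (hP : P ≠ 0) {y : ℝ → ℝ} {β L : ℝ}
    (hβ : Irrational β) (hL : L ≠ 0)
    (hy : Tendsto (fun x : ℝ => (1 - x) ^ β * y x) (𝓝[<] 1) (𝓝 L)) :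
    ¬ ∀ᶠ x in 𝓝[<] (1 : ℝ), eval₂ (evalRingHom x) (y x) P = 0 := by
  intro h
  set m : ℕ → ℕ := fun j => (P.coeff j).rootMultiplicity 1 with hm
  set q : ℕ → ℝ[X] := fun j => P.coeff j /ₘ (X - C 1) ^ m j with hq
  have hpq (j : ℕ) : (X - C 1) ^ m j * q j = P.coeff j :=
    pow_mul_divByMonic_rootMultiplicity_eq _ _
  have hinj {i j : ℕ} (hij : (m i : ℝ) - β * i = m j - β * j) : i = j := by
    by_contra hne
    have hz : (i : ℤ) - j ≠ 0 := sub_ne_zero.2 (by exact_mod_cast hne)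
    refine (hβ.mul_intCast hz).ne_int ((m i : ℤ) - m j) ?_
    push_cast
    linarith
  obtain ⟨k, hk, hmin⟩ := P.support.exists_min_image (fun j => (m j : ℝ) - β * j)
    (nonempty_support_iff.2 hP)
  have hsub : Tendsto (fun x : ℝ => 1 - x) (𝓝[<] 1) (𝓝[>] 0) := by
    refine tendsto_nhdsWithin_iff.2 ⟨?_, ?_⟩
    · have : ContinuousAt (fun x : ℝ => 1 - x) 1 := by fun_prop
      simpa using this.tendsto.mono_left nhdsWithin_le_nhds
    · filter_upwards [self_mem_nhdsWithin] with x hx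
      simpa using hx
  have hterm (j : ℕ) (hj : j ∈ P.support) :
      Tendsto (fun x : ℝ => (1 - x) ^ ((m j - β * j) - (m k - β * k)) *
        ((-1) ^ m j * (q j).eval x * ((1 - x) ^ β * y x) ^ j)) (𝓝[<] 1)
        (𝓝 (if j = k then (-1) ^ m j * (q j).eval 1 * L ^ j else 0)) := by
    have h1 : Tendsto (fun x : ℝ => (-1) ^ m j * (q j).eval x * ((1 - x) ^ β * y x) ^ j) (𝓝[<] 1)
        (𝓝 ((-1) ^ m j * (q j).eval 1 * L ^ j)) :=
      (((q j).continuous.tendsto 1).mono_left nhdsWithin_le_nhds |>.const_mul _).mul (hy.pow j)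
    split_ifs with hjk
    · subst hjk
      simpa using h1
    · have hpos : 0 < (m j - β * j) - (m k - β * k) :=
        sub_pos.2 ((hmin j hj).lt_of_ne fun he => hjk (hinj he.symm))
      have h2 : Tendsto (fun x : ℝ => (1 - x) ^ ((m j - β * j) - (m k - β * k))) (𝓝[<] 1) (𝓝 0) := by
        have := (Real.continuousAt_rpow_const 0 _ (.inr hpos.le)).tendsto
        rw [Real.zero_rpow hpos.ne'] at this
        exact this.comp (hsub.mono_right nhdsWithin_le_nhds)
      simpa using h2.mul h1
  have hsum := tendsto_finsetSum _ hterm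
  rw [sum_ite_eq' _ k, if_pos hk] at hsum
  have hlim : (-1) ^ m k * (q k).eval 1 * L ^ k ≠ 0 := by
    refine mul_ne_zero (mul_ne_zero (by simp) ?_) (pow_ne_zero _ hL)
    exact eval_divByMonic_pow_rootMultiplicity_ne_zero 1 (mem_support_iff.1 hk)
  refine hlim (tendsto_nhds_unique hsum (tendsto_const_nhds.congr' ?_))
  filter_upwards [h, self_mem_nhdsWithin] with x hx hx1
  have hx0 : 0 < 1 - x := sub_pos.2 hx1
  have : ∑ j ∈ P.support, (1 - x) ^ ((m j - β * j) - (m k - β * k)) *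
      ((-1) ^ m j * (q j).eval x * ((1 - x) ^ β * y x) ^ j) =
      (1 - x) ^ (-(m k - β * k)) * eval₂ (evalRingHom x) (y x) P := by
    rw [eval₂_eq_sum, Polynomial.sum, mul_sum]
    refine sum_congr rfl fun j _ => ?_
    have e1 : (1 - x) ^ ((m j - β * j) - (m k - β * k)) =
        (1 - x) ^ (-(m k - β * k)) * ((1 - x) ^ m j / ((1 - x) ^ β) ^ j) := by
      rw [sub_eq_neg_add (m j - β * j : ℝ), Real.rpow_add hx0, Real.rpow_sub hx0, Real.rpow_natCast,
        Real.rpow_mul hx0.le, Real.rpow_natCast]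
    have e2 : (P.coeff j).eval x = (-1) ^ m j * (1 - x) ^ m j * (q j).eval x := by
      rw [← hpq j, ← mul_pow]
      simp
    have e3 : (1 - x) ^ β ≠ 0 := (Real.rpow_pos_of_pos hx0 _).ne'
    rw [e1, coe_evalRingHom, e2, mul_pow]
    field_simp
  rw [this, hx, mul_zero]

namespace PowerSeries

open scoped Polynomial

theorem summable_coeff_mul_mul_pow {f g : ℝ⟦X⟧} {x : ℝ} (hf : Summable fun n => coeff n f * x ^ n)
    (hg : Summable fun n => coeff n g * x ^ n) :
    Summable (fun n => coeff n (f * g) * x ^ n) ∧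
      ∑' n, coeff n (f * g) * x ^ n = (∑' n, coeff n f * x ^ n) * ∑' n, coeff n g * x ^ n := by
  have h (n : ℕ) : coeff n (f * g) * x ^ n =
      ∑ kl ∈ antidiagonal n, coeff kl.1 f * x ^ kl.1 * (coeff kl.2 g * x ^ kl.2) := by
    rw [coeff_mul, sum_mul]
    refine sum_congr rfl fun kl hkl => ?_
    rw [← mem_antidiagonal.1 hkl, pow_add]
    ring
  simp only [h]
  exact ⟨(summable_norm_sum_mul_antidiagonal_of_summable_norm hf.norm hg.norm).of_norm,
    (tsum_mul_tsum_eq_tsum_sum_antidiagonal_of_summable_norm hf.norm hg.norm).symm⟩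

/-- Evaluation at a point of convergence commutes with polynomial expressions. -/
theorem summable_coeff_aeval_mul_pow {f : ℝ⟦X⟧} {x : ℝ}
    (hf : Summable fun n => coeff n f * x ^ n) (P : ℝ[X][X]) :
    Summable (fun n => coeff n (Polynomial.aeval f P) * x ^ n) ∧
      ∑' n, coeff n (Polynomial.aeval f P) * x ^ n =
        Polynomial.eval₂ (Polynomial.evalRingHom x) (∑' n, coeff n f * x ^ n) P := by
  induction P using Polynomial.induction_on with
  | C p =>
    have h : HasSum (fun n => p.coeff n * x ^ n) (p.eval x) := by
      rw [Polynomial.eval_eq_sum, Polynomial.sum]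
      refine hasSum_sum_of_ne_finset_zero fun n hn => ?_
      rw [Polynomial.notMem_support_iff.1 hn, zero_mul]
    simpa [algebraMap_apply'] using And.intro h.summable h.tsum_eq
  | add p q hp hq =>
    simp only [map_add, add_mul, Polynomial.eval₂_add, ← hp.2, ← hq.2]
    exact ⟨hp.1.add hq.1, hp.1.tsum_add hq.1⟩
  | monomial n p h =>
    have := summable_coeff_mul_mul_pow h.1 hf
    rw [pow_succ, ← mul_assoc, map_mul, Polynomial.aeval_X, Polynomial.eval₂_mul,
      Polynomial.eval₂_X, ← h.2]
    exact this

theorem not_isAlgebraic_mk_of_pos {a : ℕ → ℝ} {β L : ℝ} (hβ : Irrational β) (h : 0 < β)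
    (hL : L ≠ 0) (ha : Tendsto (fun n => a n / gammaCoeff β n) atTop (𝓝 L)) :
    ¬ IsAlgebraic ℝ[X] (mk a) := by
  rintro ⟨P, hP, hP0⟩
  refine not_eventually_eval₂_eq_zero hP hβ (mul_ne_zero hL (Real.Gamma_pos_of_pos h).ne')
    (tendsto_one_sub_rpow_mul_tsum hβ h ha) ?_
  filter_upwards [Ioo_mem_nhdsLT (zero_lt_one' ℝ)] with x hx
  have hx' : |x| < 1 := by rw [abs_of_pos hx.1]; exact hx.2
  have := (summable_coeff_aeval_mul_pow (f := mk a) (x := x)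
    (by simpa using summable_mul_pow_of_tendsto_div_gammaCoeff hβ ha hx') P).2
  simpa [hP0] using this.symm

theorem one_sub_X_mul_mk_tail {a : ℕ → ℝ} (ha : Summable a) :
    (1 - X) * mk (fun n => ∑' m, a (m + n + 1)) = C (∑' n, a n) - mk a := by
  ext n
  rw [sub_mul, one_mul, map_sub, map_sub, coeff_mk, coeff_mk, coeff_C]
  cases n with
  | zero => simp [ha.tsum_eq_zero_add]
  | succ n =>
    have h : Summable fun m => a (m + n + 1) := by
      simpa only [add_assoc] using (summable_nat_add_iff (n + 1)).2 ha
    rw [coeff_succ_X_mul, coeff_mk, h.tsum_eq_zero_add]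
    simp [add_comm, add_left_comm]

theorem isAlgebraic_mk_tail {a : ℕ → ℝ} (ha : Summable a) (h : IsAlgebraic ℝ[X] (mk a)) :
    IsAlgebraic ℝ[X] (mk fun n => ∑' m, a (m + n + 1)) := by
  have hX : algebraMap ℝ[X] ℝ⟦X⟧ (1 - Polynomial.X) = 1 - X := by
    simp [algebraMap_apply']
  have hC : algebraMap ℝ[X] ℝ⟦X⟧ (Polynomial.C (∑' n, a n)) = C (∑' n, a n) := by
    simp [algebraMap_apply']
  refine IsAlgebraic.of_mul (R := ℝ[X]) (y := 1 - X) (mem_nonZeroDivisors_of_ne_zero fun h0 => ?_)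
    (hX ▸ isAlgebraic_algebraMap _) ?_
  · simpa using congrArg (coeff 0) h0
  · rw [one_sub_X_mul_mk_tail ha, ← hC]
    exact (isAlgebraic_algebraMap _).sub h

theorem not_isAlgebraic_mk {a : ℕ → ℝ} {β L : ℝ} (hβ : Irrational β) (hL : L ≠ 0)
    (ha : Tendsto (fun n => a n / gammaCoeff β n) atTop (𝓝 L)) :
    ¬ IsAlgebraic ℝ[X] (mk a) := by
  obtain ⟨k, hk⟩ := exists_nat_gt (-β)
  induction k generalizing a β L with
  | zero => exact not_isAlgebraic_mk_of_pos hβ (by simpa using hk) hL ha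
  | succ k ih =>
    rcases lt_trichotomy β 0 with h | h | h
    · intro halg
      refine ih (by exact_mod_cast hβ.add_natCast 1) (div_ne_zero hL (neg_ne_zero.2 h.ne))
        (tendsto_tail_div_gammaCoeff hβ h ha) ?_
        (isAlgebraic_mk_tail (summable_of_tendsto_div_gammaCoeff hβ h ha) halg)
      push_cast at hk
      linarith
    · exact absurd h hβ.ne_zero
    · exact not_isAlgebraic_mk_of_pos hβ h hL ha

theorem isAlgebraic_rescale {f : ℝ⟦X⟧} {r : ℝ} (hr : r ≠ 0) (h : IsAlgebraic ℝ[X] f) :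
    IsAlgebraic ℝ[X] (rescale r f) := by
  obtain ⟨P, hP, hP0⟩ := h
  let ψ : ℝ[X] →+* ℝ[X] := Polynomial.compRingHom (Polynomial.C r * Polynomial.X)
  have hψ : Function.Injective ψ := fun p q hpq => by
    have := congrArg (fun s => s.comp (Polynomial.C r⁻¹ * Polynomial.X)) hpq
    simpa [ψ, Polynomial.comp_assoc, ← mul_assoc, ← Polynomial.C_mul, hr] using this
  have hcomp : (algebraMap ℝ[X] ℝ⟦X⟧).comp ψ = (rescale r).comp (algebraMap ℝ[X] ℝ⟦X⟧) := by
    refine Polynomial.ringHom_ext (fun c => ?_) ?_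
    · ext n
      simp only [ψ, RingHom.comp_apply, Polynomial.coe_compRingHom, Polynomial.C_comp,
        algebraMap_apply', Polynomial.coe_C, coeff_rescale, coeff_map, coeff_C]
      split_ifs with hn <;> simp [hn]
    · simp [ψ, algebraMap_apply', rescale_X]
  refine ⟨P.map ψ, (Polynomial.map_ne_zero_iff hψ).2 hP, ?_⟩
  rw [Polynomial.aeval_def, Polynomial.eval₂_map, hcomp, ← Polynomial.hom_eval₂,
    ← Polynomial.aeval_def, hP0, map_zero]

end PowerSeries

open Polynomial in
theorem stmt_15 (a : ℕ → ℝ) (K ρ α : ℝ) (hK : 0 < K) (hρ : 0 < ρ)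
    (hα : Irrational α) (hα1 : α < -1)
    (hasymp : Filter.Tendsto (fun n : ℕ => a n / (K * ρ ^ n * (n : ℝ) ^ α))
      Filter.atTop (nhds 1)) :
    ¬ ∃ P : Polynomial (Polynomial ℚ), P ≠ 0 ∧
      Polynomial.eval₂
        ((Polynomial.coeToPowerSeries.ringHom).comp (Polynomial.mapRingHom (algebraMap ℚ ℝ)))
        (PowerSeries.mk a) P = 0 := by
  rintro ⟨P, hP, hP0⟩
  have halg : IsAlgebraic ℝ[X] (PowerSeries.mk a) := by
    refine ⟨P.map (mapRingHom (algebraMap ℚ ℝ)), ?_, ?_⟩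
    · exact (Polynomial.map_ne_zero_iff
        (Polynomial.map_injective _ (algebraMap ℚ ℝ).injective)).2 hP
    · rw [aeval_def, eval₂_map]
      convert! hP0 using 2
  have hβ : Irrational (α + 1) := by exact_mod_cast hα.add_natCast 1
  have hresc := PowerSeries.isAlgebraic_rescale (inv_ne_zero hρ.ne') halg
  rw [PowerSeries.rescale_mk] at hresc
  refine PowerSeries.not_isAlgebraic_mk hβ hK.ne' ?_ hresc
  have h := (hasymp.const_mul K).div (tendsto_gammaCoeff_div_rpow hβ) one_ne_zero
  rw [mul_one, div_one] at h
  refine h.congr' ?_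
  filter_upwards [eventually_gt_atTop 0] with n hn
  have h1 : (n : ℝ) ^ α ≠ 0 := (Real.rpow_pos_of_pos (by exact_mod_cast hn) _).ne'
  have h2 := gammaCoeff_ne_zero hβ n
  simp only [Pi.div_apply, add_sub_cancel_right, inv_pow]
  field_simp
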